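/- Let v ∈ ℝ⁴ be a fixed vector, and let x, r be such that B̄_{x'}(r) ⊆ Ω for all x' in a neighborhood of x and H_φ(x',r) > 0 for all such x'. Then x ↦ N_φ(x,r) is differentiable in the direction v at x, and ∂_v N_φ(x,r) = (2/H_φ(x,r)) ∫ −|y−x|⁻¹ φ'(|y−x|/r) ⟨∂_{η_x}u(y) − N_φ(x,r)·u(y), ∂_v u(y)⟩ dy. -/

import Mathlib

open Metric MeasureTheory
open scoped RealInnerProductSpace

noncomputable section

abbrev E4 := EuclideanSpace ℝ (Fin 4)

variable {E : Type*} [NormedAddCommGroup E] [InnerProductSpace ℝ E] [FiniteDimensional ℝ E]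

/-- `u` is smooth and harmonic (the Laplacian, i.e. the sum of the pure second
derivatives in the coordinate directions, vanishes) on `Ω`. -/
def IsHarmonicOn (u : E4 → E) (Ω : Set E4) : Prop :=
  ContDiffOn ℝ (⊤ : ℕ∞) u Ω ∧
  ∀ x ∈ Ω, ∑ i : Fin 4,
    iteratedFDeriv ℝ 2 u x ![EuclideanSpace.single i (1:ℝ), EuclideanSpace.single i 1] = 0

/-- `|∇u(y)|²`, the squared Frobenius norm of the derivative of `u` at `y`. -/
def gradSq (u : E4 → E) (y : E4) : ℝ :=
  ∑ i : Fin 4, ‖fderiv ℝ u y (EuclideanSpace.single i (1:ℝ))‖ ^ 2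

/-- `D_φ(x,r) = ∫ |∇u(y)|² φ(|y−x|/r) dy`. -/
def Dphi (φ : ℝ → ℝ) (u : E4 → E) (x : E4) (r : ℝ) : ℝ :=
  ∫ y, gradSq u y * φ (‖y - x‖ / r)

/-- `H_φ(x,r) = −∫ |u(y)|² |y−x|⁻¹ φ'(|y−x|/r) dy`. -/
def Hphi (φ : ℝ → ℝ) (u : E4 → E) (x : E4) (r : ℝ) : ℝ :=
  -∫ y, ‖u y‖ ^ 2 * ‖y - x‖⁻¹ * deriv φ (‖y - x‖ / r)

/-- `E_φ(x,r) = −∫ |∂_{ν_x}u(y)|² |y−x| φ'(|y−x|/r) dy`, where `ν_x(y) = (y−x)/|y−x|`. -/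
def Ephi (φ : ℝ → ℝ) (u : E4 → E) (x : E4) (r : ℝ) : ℝ :=
  -∫ y, ‖fderiv ℝ u y (‖y - x‖⁻¹ • (y - x))‖ ^ 2 * ‖y - x‖ * deriv φ (‖y - x‖ / r)

/-- The smoothed frequency `N_φ(x,r) = r D_φ(x,r) / H_φ(x,r)`. -/
def Nphi (φ : ℝ → ℝ) (u : E4 → E) (x : E4) (r : ℝ) : ℝ :=
  r * Dphi φ u x r / Hphi φ u x r

/-!
Translating the center of a localized integral `∫ K(y - x) f(y) dy` is the same as differentiating
`f`. Applied to `f = |u|²` this gives `∂_v H` directly. Applied to `f = |∇u|²` it gives `∂_v D`,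
and since `u` is harmonic, `∂_v |∇u|² = 2 ∑ᵢ ∂ᵢ⟨∂ᵢu, ∂_v u⟩` is a divergence; integrating by parts
moves the derivative onto the cutoff, and `∇(φ(|z|/r)) = r⁻¹ |z|⁻¹ φ'(|z|/r) z` turns `r ∂_v D` into
an integral of `⟨∂_{η_x}u, ∂_v u⟩` against the weight of `H`. The quotient rule combines the two.
-/

section Development

open Filter Topology InnerProductSpace
open scoped Convolution Manifold

section Translate

variable {G M : Type*} [AddGroup G] [TopologicalSpace G] [IsTopologicalAddGroup G] [Zero M]

theorem mem_tsupport_comp_sub_iff {K : G → M} {x y : G} :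
    y ∈ tsupport (fun z => K (z - x)) ↔ y - x ∈ tsupport K := by
  change y ∈ tsupport (K ∘ Homeomorph.subRight x) ↔ _
  rw [tsupport_comp_eq_preimage]
  rfl

theorem hasCompactSupport_comp_sub {K : G → M} (hK : HasCompactSupport K) (x : G) :
    HasCompactSupport fun y => K (y - x) :=
  hK.comp_homeomorph (Homeomorph.subRight x)

end Translate

theorem integrable_smul_of_continuousAt_tsupport {X F : Type*} [TopologicalSpace X]
    [MeasurableSpace X] [OpensMeasurableSpace X] [NormedAddCommGroup F] [NormedSpace ℝ F]
    {μ : Measure X} [IsFiniteMeasureOnCompacts μ] {k : X → ℝ} {f : X → F} (hk : Continuous k)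
    (hkc : HasCompactSupport k) (hf : ∀ y ∈ tsupport k, ContinuousAt f y) :
    Integrable (fun y => k y • f y) μ := by
  refine Continuous.integrable_of_hasCompactSupport (continuous_of_tsupport fun y hy => ?_)
    hkc.smul_right
  exact hk.continuousAt.smul (hf y (tsupport_smul_subset_left _ _ hy))

section DirectionalDerivative

variable {V F : Type*} [NormedAddCommGroup V] [NormedSpace ℝ V] [NormedAddCommGroup F]
  [NormedSpace ℝ F]

theorem hasFDerivAt_fderiv_apply {u : V → F} {y : V} (hu : ContDiffAt ℝ 2 u y) (w : V) :
    HasFDerivAt (fun z => fderiv ℝ u z w) ((fderiv ℝ (fderiv ℝ u) y).flip w) y := by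
  have hu' : DifferentiableAt ℝ (fderiv ℝ u) y :=
    (hu.fderiv_right (m := 1) (by norm_num)).differentiableAt one_ne_zero
  simpa using hu'.hasFDerivAt.clm_apply (hasFDerivAt_const w y)

theorem contDiffAt_fderiv_apply {u : V → F} {y : V} (hu : ContDiffAt ℝ 2 u y) (w : V) :
    ContDiffAt ℝ 1 (fun z => fderiv ℝ u z w) y :=
  (hu.fderiv_right (by norm_num)).clm_apply contDiffAt_const

end DirectionalDerivative

section Differentiation

variable {V F : Type*} [NormedAddCommGroup V] [NormedSpace ℝ V] [FiniteDimensional ℝ V]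
  [NormedAddCommGroup F] [NormedSpace ℝ F]

theorem exists_contDiff_hasCompactSupport_eventuallyEq {n : ℕ∞}
    {f : V → F} {S U : Set V} (hS : IsCompact S) (hU : IsOpen U) (hSU : S ⊆ U)
    (hf : ContDiffOn ℝ n f U) :
    ∃ g : V → F, ContDiff ℝ n g ∧ HasCompactSupport g ∧ g =ᶠ[𝓝ˢ S] f := by
  obtain ⟨T, hT, hST, hTU⟩ := exists_compact_between hS hU hSU
  obtain ⟨χ, hχ_one, hχ_zero, -⟩ :=
    exists_contMDiffMap_one_nhds_of_subset_interior (n := n) 𝓘(ℝ, V) hS.isClosed hST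
  have hχ_supp : tsupport χ ⊆ T :=
    closure_minimal (Function.support_subset_iff'.2 hχ_zero) hT.isClosed
  have hχc : HasCompactSupport χ := hT.of_isClosed_subset (isClosed_tsupport _) hχ_supp
  refine ⟨fun y => χ y • f y, ?_, hχc.smul_right, ?_⟩
  · rw [contDiff_iff_contDiffAt]
    intro y
    by_cases hy : y ∈ tsupport χ
    · exact χ.contMDiff.contDiff.contDiffAt.smul (hf.contDiffAt (hU.mem_nhds (hTU (hχ_supp hy))))
    · refine (contDiffAt_const (c := 0)).congr_of_eventuallyEq ?_
      filter_upwards [notMem_tsupport_iff_eventuallyEq.1 hy] with z hz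
      simp [hz]
  · filter_upwards [hχ_one] with y hy
    simp [hy]

variable [MeasurableSpace V] [BorelSpace V] {μ : Measure V} [μ.IsAddHaarMeasure]

theorem integral_mul_fderiv_eq_neg_of_contDiffAt_tsupport {k f : V → ℝ} (hk : ContDiff ℝ 1 k)
    (hkc : HasCompactSupport k) (hf : ∀ y ∈ tsupport k, ContDiffAt ℝ 1 f y) (v : V) :
    ∫ y, k y * fderiv ℝ f y v ∂μ = -∫ y, fderiv ℝ k y v * f y ∂μ := by
  have hk' : Continuous fun y => fderiv ℝ k y v :=
    (hk.continuous_fderiv one_ne_zero).clm_apply continuous_const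
  have hk'_supp : tsupport (fun y => fderiv ℝ k y v) ⊆ tsupport k :=
    tsupport_fderiv_apply_subset ℝ v
  refine integral_mul_fderiv_eq_neg_fderiv_mul_of_integrable ?_ ?_ ?_ ?_ ?_
  · exact integrable_smul_of_continuousAt_tsupport hk' (hkc.fderiv_apply ℝ v)
      fun y hy => (hf y (hk'_supp hy)).continuousAt
  · exact integrable_smul_of_continuousAt_tsupport hk.continuous hkc fun y hy =>
      ((hf y hy).continuousAt_fderiv one_ne_zero).clm_apply continuousAt_const
  · exact integrable_smul_of_continuousAt_tsupport hk.continuous hkc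
      fun y hy => (hf y hy).continuousAt
  · exact fun y _ => hk.differentiable one_ne_zero y
  · exact fun y hy => (hf y hy).differentiableAt one_ne_zero

theorem hasLineDerivAt_integral_comp_sub_smul_of_contDiff {K : V → ℝ} {g : V → F}
    (hK : Continuous K) (hg : ContDiff ℝ 1 g) (hgc : HasCompactSupport g) (x v : V) :
    HasLineDerivAt ℝ (fun x' => ∫ y, K (y - x') • g y ∂μ)
      (∫ y, K (y - x) • fderiv ℝ g y v ∂μ) x v := by
  have correlation_eq (h : V → F) (x' : V) :
      ∫ y, K (y - x') • h y ∂μ = ((fun z => K (-z)) ⋆[ContinuousLinearMap.lsmul ℝ ℝ, μ] h) x' := by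
    rw [convolution_eq_swap]; simp
  have hK_loc : LocallyIntegrable (fun z => K (-z)) μ := (hK.comp continuous_neg).locallyIntegrable
  simp only [correlation_eq]
  rw [← convolution_precompR_apply _ hK_loc (hgc.fderiv ℝ) (hg.continuous_fderiv one_ne_zero)]
  exact (hgc.hasFDerivAt_convolution_right _ hK_loc hg x).hasLineDerivAt v

theorem hasLineDerivAt_integral_comp_sub_smul_of_contDiffAt {K : V → ℝ} {g : V → F} {x : V}
    (hK : Continuous K) (hKc : HasCompactSupport K)
    (hg : ∀ y, y - x ∈ tsupport K → ContDiffAt ℝ 1 g y) (v : V) :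
    HasLineDerivAt ℝ (fun x' => ∫ y, K (y - x') • g y ∂μ)
      (∫ y, K (y - x) • fderiv ℝ g y v ∂μ) x v := by
  let S := {y | y - x ∈ tsupport K}
  let U := {y | ContDiffAt ℝ 1 g y}
  have hS : IsCompact S := (Homeomorph.subRight x).isCompact_preimage.2 hKc
  have hU : IsOpen U :=
    isOpen_iff_mem_nhds.2 fun y (hy : ContDiffAt ℝ 1 g y) => hy.eventually (by simp)
  -- Only values of `g` near `S` matter for `x'` near `x`, so `g` may be cut off away from `S`.
  obtain ⟨g₁, hg₁, hg₁c, hg₁S⟩ := exists_contDiff_hasCompactSupport_eventuallyEq (n := 1) hS hU hg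
    fun y hy => ContDiffAt.contDiffWithinAt hy
  have hg₁_near : ∀ y, y - x ∈ tsupport K → g₁ =ᶠ[𝓝 y] g := eventually_nhdsSet_iff_forall.1 hg₁S
  have hval : ∀ᶠ x' in 𝓝 x, ∀ z ∈ tsupport K, g₁ (z + x') = g (z + x') := by
    refine hKc.isCompact.eventually_forall_of_forall_eventually fun z hz => ?_
    have hadd : Tendsto (fun p : V × V => p.2 + p.1) (𝓝 (x, z)) (𝓝 (z + x)) :=
      (continuous_snd.add continuous_fst).tendsto (x, z)
    exact hadd.eventually (hg₁_near (z + x) (by simpa using hz))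
  have hint : (fun x' => ∫ y, K (y - x') • g y ∂μ) =ᶠ[𝓝 x]
      fun x' => ∫ y, K (y - x') • g₁ y ∂μ := by
    filter_upwards [hval] with x' hx'
    congr 1 with y
    by_cases hy : y - x' ∈ tsupport K
    · rw [← sub_add_cancel y x', hx' _ hy]
    · simp [image_eq_zero_of_notMem_tsupport hy]
  have hderiv : ∫ y, K (y - x) • fderiv ℝ g y v ∂μ = ∫ y, K (y - x) • fderiv ℝ g₁ y v ∂μ := by
    congr 1 with y
    by_cases hy : y - x ∈ tsupport K
    · rw [(hg₁_near y hy).fderiv_eq]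
    · simp [image_eq_zero_of_notMem_tsupport hy]
  rw [hderiv]
  exact (hasLineDerivAt_integral_comp_sub_smul_of_contDiff hK hg₁ hg₁c x v)
    |>.congr_of_eventuallyEq hint

end Differentiation

section Energy

variable {V F ι : Type*} [NormedAddCommGroup V] [InnerProductSpace ℝ V]
  [NormedAddCommGroup F] [InnerProductSpace ℝ F] [Fintype ι]

/-- The squared Frobenius norm `|∇u(y)|²`, computed in the orthonormal basis `b` of the domain. -/
def gradNormSq (b : OrthonormalBasis ι ℝ V) (u : V → F) (y : V) : ℝ :=
  ∑ i, ‖fderiv ℝ u y (b i)‖ ^ 2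

theorem contDiffAt_gradNormSq (b : OrthonormalBasis ι ℝ V) {u : V → F} {y : V}
    (hu : ContDiffAt ℝ 2 u y) : ContDiffAt ℝ 1 (gradNormSq b u) y :=
  ContDiffAt.sum fun i _ => (contDiffAt_fderiv_apply hu (b i)).norm_sq ℝ

theorem fderiv_gradNormSq_apply (b : OrthonormalBasis ι ℝ V) {u : V → F} {y : V}
    (hu : ContDiffAt ℝ 2 u y) (v : V) :
    fderiv ℝ (gradNormSq b u) y v =
      2 * ∑ i, ⟪fderiv ℝ u y (b i), fderiv ℝ (fderiv ℝ u) y v (b i)⟫ := by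
  have h : HasFDerivAt (gradNormSq b u) _ y := HasFDerivAt.fun_sum (u := Finset.univ)
    fun i _ => (hasFDerivAt_fderiv_apply hu (b i)).norm_sq
  rw [h.fderiv]
  simp [Finset.mul_sum]

variable [FiniteDimensional ℝ V]

theorem sum_fderiv_fderiv_apply_eq_zero_of_harmonicAt (b : OrthonormalBasis ι ℝ V) {u : V → F}
    {y : V} (hu : HarmonicAt u y) : ∑ i, fderiv ℝ (fderiv ℝ u) y (b i) (b i) = 0 := by
  simpa [laplacian_eq_iteratedFDeriv_orthonormalBasis u b, iteratedFDeriv_two_apply]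
    using hu.2.eq_of_nhds

/-- Noether's identity for translation in the direction `v`: the energy–momentum tensor of a
harmonic function is divergence free. -/
theorem two_mul_sum_fderiv_inner_fderiv_eq_of_harmonicAt (b : OrthonormalBasis ι ℝ V) {u : V → F}
    {y : V} (hu : HarmonicAt u y) (v : V) :
    2 * ∑ i, fderiv ℝ (fun z => ⟪fderiv ℝ u z (b i), fderiv ℝ u z v⟫) y (b i) =
      fderiv ℝ (gradNormSq b u) y v := by
  have hsymm : IsSymmSndFDerivAt ℝ u y := hu.1.isSymmSndFDerivAt (by simp)
  have hterm (i : ι) : fderiv ℝ (fun z => ⟪fderiv ℝ u z (b i), fderiv ℝ u z v⟫) y (b i) =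
      ⟪fderiv ℝ u y (b i), fderiv ℝ (fderiv ℝ u) y v (b i)⟫ +
        ⟪fderiv ℝ (fderiv ℝ u) y (b i) (b i), fderiv ℝ u y v⟫ := by
    rw [((hasFDerivAt_fderiv_apply hu.1 (b i)).inner ℝ (hasFDerivAt_fderiv_apply hu.1 v)).fderiv,
      hsymm.eq v]
    simp
  simp only [hterm]
  rw [Finset.sum_add_distrib, ← sum_inner, sum_fderiv_fderiv_apply_eq_zero_of_harmonicAt b hu,
    inner_zero_left, add_zero, fderiv_gradNormSq_apply b hu.1]

theorem sum_fderiv_mul_inner_eq_inner_gradient (b : OrthonormalBasis ι ℝ V) (K : V → ℝ) (z : V)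
    (A : V →L[ℝ] F) (w : F) :
    ∑ i, fderiv ℝ K z (b i) * ⟪A (b i), w⟫ = ⟪A (gradient K z), w⟫ := by
  conv_rhs => rw [← b.sum_repr' (gradient K z)]
  simp [sum_inner, real_inner_smul_left, inner_gradient_right]

variable [MeasurableSpace V] (μ : Measure V)

/-- The Dirichlet energy of `u` localized at `x` by the kernel `K`; the paper's `D_φ(x,r)` is the
case `K = radialKernel φ r`. -/
def kernelEnergy (b : OrthonormalBasis ι ℝ V) (K : V → ℝ) (u : V → F) (x : V) : ℝ :=
  ∫ y, K (y - x) * gradNormSq b u y ∂μ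

/-- The mass of `|u|²` localized at `x` by the kernel `W`; the paper's `H_φ(x,r)` is the case
`W = radialWeight φ r`. -/
def kernelHeight (W : V → ℝ) (u : V → F) (x : V) : ℝ :=
  ∫ y, W (y - x) * ‖u y‖ ^ 2 ∂μ

variable [BorelSpace V] {μ} [μ.IsAddHaarMeasure]

theorem hasLineDerivAt_kernelHeight {W : V → ℝ} {u : V → F} {x : V} (hW : Continuous W)
    (hWc : HasCompactSupport W) (hu : ∀ y, y - x ∈ tsupport W → ContDiffAt ℝ 1 u y) (v : V) :
    HasLineDerivAt ℝ (kernelHeight μ W u)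
      (2 * ∫ y, W (y - x) * ⟪u y, fderiv ℝ u y v⟫ ∂μ) x v := by
  have hderiv : ∫ y, W (y - x) * fderiv ℝ (fun z => ‖u z‖ ^ 2) y v ∂μ =
      2 * ∫ y, W (y - x) * ⟪u y, fderiv ℝ u y v⟫ ∂μ := by
    rw [← integral_const_mul]
    congr 1 with y
    by_cases hy : y - x ∈ tsupport W
    · rw [((hu y hy).differentiableAt one_ne_zero).hasFDerivAt.norm_sq.fderiv]
      simp only [smul_apply, ContinuousLinearMap.comp_apply, coe_innerSL_apply, nsmul_eq_mul,
        Nat.cast_ofNat]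
      ring
    · simp [image_eq_zero_of_notMem_tsupport hy]
  rw [← hderiv]
  exact hasLineDerivAt_integral_comp_sub_smul_of_contDiffAt hW hWc
    (fun y hy => (hu y hy).norm_sq ℝ) v

theorem integral_mul_fderiv_gradNormSq_of_harmonicAt (b : OrthonormalBasis ι ℝ V) {k : V → ℝ}
    {u : V → F} (hk : ContDiff ℝ 1 k) (hkc : HasCompactSupport k)
    (hu : ∀ y ∈ tsupport k, HarmonicAt u y) (v : V) :
    ∫ y, k y * fderiv ℝ (gradNormSq b u) y v ∂μ =
      -2 * ∫ y, ⟪fderiv ℝ u y (gradient k y), fderiv ℝ u y v⟫ ∂μ := by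
  let f (i : ι) (y : V) : ℝ := ⟪fderiv ℝ u y (b i), fderiv ℝ u y v⟫
  have hf (i : ι) (y : V) (hy : y ∈ tsupport k) : ContDiffAt ℝ 1 (f i) y :=
    (contDiffAt_fderiv_apply (hu y hy).1 (b i)).inner ℝ (contDiffAt_fderiv_apply (hu y hy).1 v)
  have hint (i : ι) : Integrable (fun y => k y * fderiv ℝ (f i) y (b i)) μ :=
    integrable_smul_of_continuousAt_tsupport hk.continuous hkc fun y hy =>
      ((hf i y hy).continuousAt_fderiv one_ne_zero).clm_apply continuousAt_const
  have hint' (i : ι) : Integrable (fun y => fderiv ℝ k y (b i) * f i y) μ :=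
    integrable_smul_of_continuousAt_tsupport
      ((hk.continuous_fderiv one_ne_zero).clm_apply continuous_const) (hkc.fderiv_apply ℝ (b i))
      fun y hy => (hf i y (tsupport_fderiv_apply_subset ℝ (b i) hy)).continuousAt
  calc ∫ y, k y * fderiv ℝ (gradNormSq b u) y v ∂μ
      = ∫ y, 2 * ∑ i, k y * fderiv ℝ (f i) y (b i) ∂μ := by
        congr 1 with y
        by_cases hy : y ∈ tsupport k
        · rw [← two_mul_sum_fderiv_inner_fderiv_eq_of_harmonicAt b (hu y hy) v, ← Finset.mul_sum]
          ring
        · simp [image_eq_zero_of_notMem_tsupport hy]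
    _ = 2 * ∑ i, ∫ y, k y * fderiv ℝ (f i) y (b i) ∂μ := by
        rw [integral_const_mul, integral_finsetSum _ fun i _ => hint i]
    _ = -2 * ∑ i, ∫ y, fderiv ℝ k y (b i) * f i y ∂μ := by
        simp only [integral_mul_fderiv_eq_neg_of_contDiffAt_tsupport hk hkc (hf _),
          Finset.sum_neg_distrib]
        ring
    _ = -2 * ∫ y, ⟪fderiv ℝ u y (gradient k y), fderiv ℝ u y v⟫ ∂μ := by
        rw [← integral_finsetSum _ fun i _ => hint' i]
        simp only [f, sum_fderiv_mul_inner_eq_inner_gradient]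

theorem hasLineDerivAt_kernelEnergy (b : OrthonormalBasis ι ℝ V) {K : V → ℝ} {u : V → F} {x : V}
    (hK : ContDiff ℝ 1 K) (hKc : HasCompactSupport K)
    (hu : ∀ y, y - x ∈ tsupport K → HarmonicAt u y) (v : V) :
    HasLineDerivAt ℝ (kernelEnergy μ b K u)
      (-2 * ∫ y, ⟪fderiv ℝ u y (gradient K (y - x)), fderiv ℝ u y v⟫ ∂μ) x v := by
  have hgrad (y : V) : gradient (fun z => K (z - x)) y = gradient K (y - x) := by
    simp [gradient, fderiv_comp_sub]
  have hKx : ContDiff ℝ 1 fun y => K (y - x) := hK.comp (contDiff_id.sub contDiff_const)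
  have hderiv := integral_mul_fderiv_gradNormSq_of_harmonicAt (μ := μ) b hKx
    (hasCompactSupport_comp_sub hKc x) (fun y hy => hu y (mem_tsupport_comp_sub_iff.1 hy)) v
  simp only [hgrad] at hderiv
  rw [← hderiv]
  exact hasLineDerivAt_integral_comp_sub_smul_of_contDiffAt hK.continuous hKc
    (fun y hy => contDiffAt_gradNormSq b (hu y hy).1) v

end Energy

section Radial

variable {V : Type*} [NormedAddCommGroup V]

/-- The radial cutoff `z ↦ φ(|z|/r)`, the kernel of `D_φ(·,r)`. -/
def radialKernel (φ : ℝ → ℝ) (r : ℝ) (z : V) : ℝ := φ (‖z‖ / r)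

/-- The weight `z ↦ -|z|⁻¹ φ'(|z|/r)` of `H_φ(·,r)`. At `z = 0`, where the inverse is a junk value,
it is `0`. -/
def radialWeight (φ : ℝ → ℝ) (r : ℝ) (z : V) : ℝ := -(‖z‖⁻¹ * deriv φ (‖z‖ / r))

variable {φ : ℝ → ℝ} {r : ℝ}

theorem eventuallyConst_radialKernel (hφ : EventuallyConst φ (𝓝 0)) :
    EventuallyConst (radialKernel φ r : V → ℝ) (𝓝 0) :=
  hφ.comp_tendsto <| by simpa using (continuous_norm.div_const r).tendsto (0 : V)

theorem radialWeight_eventuallyEq_zero (hφ : EventuallyConst φ (𝓝 0)) :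
    (radialWeight φ r : V → ℝ) =ᶠ[𝓝 0] 0 := by
  obtain ⟨c, hc⟩ := eventuallyConst_iff_exists_eventuallyEq.1 hφ
  have hlim : Tendsto (fun z : V => ‖z‖ / r) (𝓝 0) (𝓝 0) := by
    simpa using (continuous_norm.div_const r).tendsto (0 : V)
  filter_upwards [hlim.eventually hc.deriv] with z hz
  simp [radialWeight, hz]

theorem tsupport_radialKernel_subset (hφ : ∀ t, 1 ≤ t → φ t = 0) (hr : 0 < r) :
    tsupport (radialKernel φ r : V → ℝ) ⊆ closedBall 0 r := by
  refine closure_minimal (Function.support_subset_iff'.2 fun z hz => hφ _ ?_) isClosed_closedBall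
  rw [mem_closedBall_zero_iff, not_le] at hz
  exact (one_le_div₀ hr).2 hz.le

theorem tsupport_radialWeight_subset (hφ : ∀ t, 1 ≤ t → φ t = 0) (hr : 0 < r) :
    tsupport (radialWeight φ r : V → ℝ) ⊆ closedBall 0 r := by
  refine closure_minimal (Function.support_subset_iff'.2 fun z hz => ?_) isClosed_closedBall
  rw [mem_closedBall_zero_iff, not_le] at hz
  have hφz : φ =ᶠ[𝓝 (‖z‖ / r)] fun _ => 0 := by
    filter_upwards [Ioi_mem_nhds ((one_lt_div₀ hr).2 hz)] with t ht using hφ t (le_of_lt ht)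
  simp [radialWeight, hφz.deriv_eq]

theorem hasCompactSupport_radialKernel [ProperSpace V] (hφ : ∀ t, 1 ≤ t → φ t = 0) (hr : 0 < r) :
    HasCompactSupport (radialKernel φ r : V → ℝ) :=
  (isCompact_closedBall 0 r).of_isClosed_subset (isClosed_tsupport _)
    (tsupport_radialKernel_subset hφ hr)

theorem hasCompactSupport_radialWeight [ProperSpace V] (hφ : ∀ t, 1 ≤ t → φ t = 0) (hr : 0 < r) :
    HasCompactSupport (radialWeight φ r : V → ℝ) :=
  (isCompact_closedBall 0 r).of_isClosed_subset (isClosed_tsupport _)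
    (tsupport_radialWeight_subset hφ hr)

theorem continuous_radialWeight (hφ : ContDiff ℝ 1 φ) (hφ_const : EventuallyConst φ (𝓝 0)) :
    Continuous (radialWeight φ r : V → ℝ) := by
  refine continuous_iff_continuousAt.2 fun z => ?_
  rcases eq_or_ne z 0 with rfl | hz
  · exact continuousAt_const.congr (radialWeight_eventuallyEq_zero hφ_const).symm
  · have hφ' : Continuous fun y : V => deriv φ (‖y‖ / r) :=
      (hφ.continuous_deriv le_rfl).comp (continuous_norm.div_const r)
    have hinv : ContinuousAt (fun y : V => ‖y‖⁻¹) z :=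
      continuousAt_id.norm.inv₀ (norm_ne_zero_iff.2 hz)
    exact (hinv.mul hφ'.continuousAt).neg

variable [InnerProductSpace ℝ V]

theorem contDiff_radialKernel {n : WithTop ℕ∞} (hφ : ContDiff ℝ n φ)
    (hφ_const : EventuallyConst φ (𝓝 0)) : ContDiff ℝ n (radialKernel φ r : V → ℝ) := by
  refine contDiff_iff_contDiffAt.2 fun z => ?_
  rcases eq_or_ne z 0 with rfl | hz
  · obtain ⟨c, hc⟩ := eventuallyConst_iff_exists_eventuallyEq.1
      (eventuallyConst_radialKernel (V := V) (r := r) hφ_const)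
    exact contDiffAt_const.congr_of_eventuallyEq hc
  · exact hφ.contDiffAt.comp z ((contDiffAt_norm ℝ hz).div_const r)

variable [CompleteSpace V]

theorem hasGradientAt_norm {z : V} (hz : z ≠ 0) : HasGradientAt (‖·‖) (‖z‖⁻¹ • z) z := by
  have h := (hasStrictFDerivAt_norm_sq z).hasFDerivAt.sqrt (by simpa using hz)
  simp only [Real.sqrt_sq (norm_nonneg _)] at h
  refine hasGradientAt_iff_hasFDerivAt.2 (h.congr_fderiv ?_)
  ext w
  simp only [one_div, mul_inv_rev, smul_apply, coe_innerSL_apply, nsmul_eq_mul, Nat.cast_ofNat,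
    smul_eq_mul, map_smul, toDual_apply_apply]
  field_simp

theorem gradient_radialKernel (hφ : Differentiable ℝ φ) (hφ_const : EventuallyConst φ (𝓝 0))
    (z : V) : gradient (radialKernel φ r) z = -(r⁻¹ * radialWeight φ r z) • z := by
  rcases eq_or_ne z 0 with rfl | hz
  · obtain ⟨c, hc⟩ := eventuallyConst_iff_exists_eventuallyEq.1
      (eventuallyConst_radialKernel (V := V) (r := r) hφ_const)
    rw [hc.gradient_eq, gradient_fun_const, smul_zero]
  · have h := (hφ (‖z‖ / r)).hasDerivAt.comp_hasFDerivAt z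
      ((hasGradientAt_norm hz).hasFDerivAt.mul_const r⁻¹)
    refine (hasGradientAt_iff_hasFDerivAt.2 (h.congr_fderiv ?_)).gradient
    ext w
    simp only [map_smul, smul_apply, toDual_apply_apply, smul_eq_mul, radialWeight, mul_neg,
      neg_neg]
    ring

end Radial

section Frequency

variable {V F ι : Type*} [NormedAddCommGroup V] [InnerProductSpace ℝ V] [FiniteDimensional ℝ V]
  [MeasurableSpace V] [NormedAddCommGroup F] [InnerProductSpace ℝ F] [Fintype ι]

/-- The smoothed frequency `r D_φ(x,r) / H_φ(x,r)` on a Euclidean space of any dimension, with the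
center `x` as last argument. -/
def smoothedFrequency (μ : Measure V) (b : OrthonormalBasis ι ℝ V) (φ : ℝ → ℝ) (r : ℝ) (u : V → F)
    (x : V) : ℝ :=
  r * kernelEnergy μ b (radialKernel φ r) u x / kernelHeight μ (radialWeight φ r) u x

variable [BorelSpace V] {μ : Measure V} [μ.IsAddHaarMeasure] {φ : ℝ → ℝ} {r : ℝ} {u : V → F} {x : V}

theorem hasLineDerivAt_kernelEnergy_radialKernel (b : OrthonormalBasis ι ℝ V)
    (hφ : ContDiff ℝ 1 φ) (hφ_const : EventuallyConst φ (𝓝 0)) (hφ_zero : ∀ t, 1 ≤ t → φ t = 0)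
    (hr : 0 < r) (hu : HarmonicOnNhd u (closedBall x r)) (v : V) :
    HasLineDerivAt ℝ (kernelEnergy μ b (radialKernel φ r) u)
      (2 * r⁻¹ * ∫ y, radialWeight φ r (y - x) * ⟪fderiv ℝ u y (y - x), fderiv ℝ u y v⟫ ∂μ)
      x v := by
  have hD := hasLineDerivAt_kernelEnergy (μ := μ) b (contDiff_radialKernel (r := r) hφ hφ_const)
    (hasCompactSupport_radialKernel hφ_zero hr)
    (fun y hy => hu y (by simpa [dist_eq_norm] using tsupport_radialKernel_subset hφ_zero hr hy)) v
  simpa only [gradient_radialKernel (hφ.differentiable one_ne_zero) hφ_const, map_smul, neg_smul,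
    map_neg, inner_neg_left, real_inner_smul_left, integral_neg, mul_assoc, integral_const_mul,
    neg_mul_neg] using hD

theorem integral_radialWeight_mul_inner_sub (hφ : ContDiff ℝ 1 φ)
    (hφ_const : EventuallyConst φ (𝓝 0)) (hφ_zero : ∀ t, 1 ≤ t → φ t = 0) (hr : 0 < r)
    (hu : ∀ y ∈ closedBall x r, ContDiffAt ℝ 1 u y) (c : ℝ) (v : V) :
    ∫ y, radialWeight φ r (y - x) * ⟪fderiv ℝ u y (y - x) - c • u y, fderiv ℝ u y v⟫ ∂μ =
      ∫ y, radialWeight φ r (y - x) * ⟪fderiv ℝ u y (y - x), fderiv ℝ u y v⟫ ∂μ -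
        c * ∫ y, radialWeight φ r (y - x) * ⟪u y, fderiv ℝ u y v⟫ ∂μ := by
  have hint {f : V → ℝ} (hf : ∀ y ∈ closedBall x r, ContinuousAt f y) :
      Integrable (fun y => radialWeight φ r (y - x) * f y) μ := by
    refine integrable_smul_of_continuousAt_tsupport
      ((continuous_radialWeight hφ hφ_const).comp (continuous_sub_right x))
      (hasCompactSupport_comp_sub (hasCompactSupport_radialWeight hφ_zero hr) x) fun y hy => hf y ?_
    simpa [dist_eq_norm] using
      tsupport_radialWeight_subset hφ_zero hr (mem_tsupport_comp_sub_iff.1 hy)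
  have hDu (y : V) (hy : y ∈ closedBall x r) : ContinuousAt (fderiv ℝ u) y :=
    (hu y hy).continuousAt_fderiv one_ne_zero
  rw [← integral_const_mul, ← integral_sub]
  · congr 1 with y
    rw [inner_sub_left, real_inner_smul_left]
    ring
  · exact hint fun y hy =>
      ((hDu y hy).clm_apply (by fun_prop)).inner ((hDu y hy).clm_apply (by fun_prop))
  · exact (hint fun y hy =>
      (hu y hy).continuousAt.inner ((hDu y hy).clm_apply (by fun_prop))).const_mul c

theorem stmt_13_general (b : OrthonormalBasis ι ℝ V) (hφ : ContDiff ℝ 1 φ)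
    (hφ_const : EventuallyConst φ (𝓝 0)) (hφ_zero : ∀ t, 1 ≤ t → φ t = 0) (hr : 0 < r)
    (hu : HarmonicOnNhd u (closedBall x r)) (hH : kernelHeight μ (radialWeight φ r) u x ≠ 0)
    (v : V) :
    HasLineDerivAt ℝ (smoothedFrequency μ b φ r u)
      (2 / kernelHeight μ (radialWeight φ r) u x *
        ∫ y, radialWeight φ r (y - x) *
          ⟪fderiv ℝ u y (y - x) - smoothedFrequency μ b φ r u x • u y, fderiv ℝ u y v⟫ ∂μ) x v := by
  have hu₁ (y : V) (hy : y ∈ closedBall x r) : ContDiffAt ℝ 1 u y := (hu y hy).1.of_le (by norm_num)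
  have hD : HasDerivAt (fun t : ℝ => kernelEnergy μ b (radialKernel φ r) u (x + t • v)) _ 0 :=
    hasLineDerivAt_kernelEnergy_radialKernel b hφ hφ_const hφ_zero hr hu v
  have hH' : HasDerivAt (fun t : ℝ => kernelHeight μ (radialWeight φ r) u (x + t • v)) _ 0 :=
    hasLineDerivAt_kernelHeight (continuous_radialWeight hφ hφ_const)
      (hasCompactSupport_radialWeight hφ_zero hr)
      (fun y hy => hu₁ y
        (by simpa [dist_eq_norm] using tsupport_radialWeight_subset hφ_zero hr hy)) v
  refine ((hD.const_mul r).div hH' (by simpa using hH)).congr_deriv ?_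
  rw [integral_radialWeight_mul_inner_sub hφ hφ_const hφ_zero hr hu₁]
  simp only [zero_smul, add_zero, smoothedFrequency]
  field_simp

end Frequency

end Development

section Specialization

open Filter Topology InnerProductSpace

theorem eventuallyConst_nhds_of_forall_le {α β : Type*} [LinearOrder α] [TopologicalSpace α]
    [ClosedIciTopology α] {f : α → β} {a b : α} {c : β} (hab : a < b) (hf : ∀ t ≤ b, f t = c) :
    EventuallyConst f (𝓝 a) :=
  .of_tendsto (x := c) (tendsto_pure.2 (eventually_of_mem (Iic_mem_nhds hab) hf))

variable {F : Type*} [NormedAddCommGroup F]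

theorem kernelHeight_radialWeight_eq_Hphi (φ : ℝ → ℝ) (u : E4 → F) (x : E4) (r : ℝ) :
    kernelHeight volume (radialWeight φ r) u x = Hphi φ u x r := by
  rw [kernelHeight, Hphi, ← integral_neg]
  congr 1 with y
  rw [radialWeight]
  ring

variable [InnerProductSpace ℝ F]

theorem smoothedFrequency_eq_Nphi (φ : ℝ → ℝ) (u : E4 → F) (x : E4) (r : ℝ) :
    smoothedFrequency volume (EuclideanSpace.basisFun (Fin 4) ℝ) φ r u x = Nphi φ u x r := by
  have hD : kernelEnergy volume (EuclideanSpace.basisFun (Fin 4) ℝ) (radialKernel φ r) u x =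
      Dphi φ u x r := by
    simp [kernelEnergy, Dphi, gradNormSq, gradSq, radialKernel, mul_comm]
  rw [smoothedFrequency, Nphi, hD, kernelHeight_radialWeight_eq_Hphi]

theorem IsHarmonicOn.harmonicOnNhd {u : E4 → F} {Ω : Set E4} (hu : IsHarmonicOn u Ω)
    (hΩ : IsOpen Ω) : HarmonicOnNhd u Ω := by
  refine fun x hx => ⟨(hu.1.contDiffAt (hΩ.mem_nhds hx)).of_le (by norm_cast), ?_⟩
  filter_upwards [hΩ.mem_nhds hx] with y hy
  rw [laplacian_eq_iteratedFDeriv_orthonormalBasis u (EuclideanSpace.basisFun (Fin 4) ℝ)]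
  simpa using hu.2 y hy

end Specialization

/-- Flat-case spatial derivative of the smoothed frequency (Corollary 4.5):
`∂_v N_φ(x,r) = (2/H_φ(x,r)) ∫ −|y−x|⁻¹ φ'(|y−x|/r)
  ⟨∂_{η_x}u(y) − N_φ(x,r) u(y), ∂_v u(y)⟩ dy`. -/
theorem stmt_13 (φ : ℝ → ℝ) (hφs : ContDiff ℝ (⊤ : ℕ∞) φ) (hφa : Antitone φ)
    (hφ1 : ∀ t ≤ (3/4 : ℝ), φ t = 1) (hφ0 : ∀ t, (1:ℝ) ≤ t → φ t = 0)
    (Ω : Set E4) (hΩ : IsOpen Ω) (u : E4 → E) (hu : IsHarmonicOn u Ω)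
    (v : E4) (x : E4) (r : ℝ) (hr : 0 < r)
    (hx : ∀ᶠ x' in nhds x, closedBall x' r ⊆ Ω ∧ 0 < Hphi φ u x' r) :
    HasDerivAt (fun t : ℝ => Nphi φ u (x + t • v) r)
      ((2 / Hphi φ u x r) *
        ∫ y, -(‖y - x‖⁻¹ * deriv φ (‖y - x‖ / r)) *
          ⟪fderiv ℝ u y (y - x) - Nphi φ u x r • u y, fderiv ℝ u y v⟫) 0 := by
  obtain ⟨hball, hH⟩ := hx.self_of_nhds
  rw [← kernelHeight_radialWeight_eq_Hphi] at hH
  simpa only [HasLineDerivAt, smoothedFrequency_eq_Nphi, kernelHeight_radialWeight_eq_Hphi,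
    radialWeight] using stmt_13_general (EuclideanSpace.basisFun (Fin 4) ℝ) (hφs.of_le (by simp))
      (eventuallyConst_nhds_of_forall_le (by norm_num) hφ1) hφ0 hr
      ((hu.harmonicOnNhd hΩ).mono hball) hH.ne' v
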